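/- arXiv:1709.08869 — 6 statements merged into one kernel-verified Lean document; each statement's English description precedes it below -/
import Mathlib

section
/- The three elements ⊥ (the trivial variety T), SL = ⟪{(x²,x),(xy,yx)}⟫, and ⊤ (the variety of all monoids) are neutral elements of the lattice MON of monoid varieties. -/
/-!
Work in the lattice of fully invariant congruences, where neutrality is the dual (self-dual)
identity. The congruence `σ` of `SL` consists of the pairs of words with equal content.
If a fully invariant congruence `c` is not contained in `σ`, then erasing all letters but one
gives `n > 0` with `wⁿ c 1` for all words `w` (`exists_pow_of_not_le`).

Of the two inequalities in the neutrality identity only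
`(σ ⊔ b) ⊓ (b ⊔ c) ⊓ (c ⊔ σ) ≤ (σ ⊓ b) ⊔ (b ⊓ c) ⊔ (c ⊓ σ)` (`sig_median`) does not hold in every
lattice. If `b, c ≤ σ` it is trivial. If `b ≤ σ` and `c ≰ σ`, it follows from
`σ ⊓ (b ⊔ c) ≤ b ⊔ (c ⊓ σ)` (`mixed_case`):
with `d = b ⊔ (c ⊓ σ)` the relation `∃ w, u wⁿ d v wⁿ` is a fully invariant congruence
containing `b` and `c`, and on pairs of equal content it agrees with `d`, since letters outside
the content can be erased and `u wⁿ d u` whenever `con w ⊆ con u`. If neither is below `σ`, then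
for some `k > 0` all `wᵏ` are equivalent to `1` modulo `b ⊓ c`, and each `u b v` is connected by
`u, u(uv)ᵏ, v(uv)ᵏ, v` (`both_case`).
-/

/-- The free monoid over a countably infinite alphabet. -/
abbrev F : Type := FreeMonoid ℕ

/-- A congruence on the free monoid is fully invariant if it is stable
under every monoid endomorphism. -/
def IsFullyInvariant (c : Con F) : Prop :=
  ∀ f : F →* F, ∀ u v : F, c u v → c (f u) (f v)

/-- The type of fully invariant congruences on `F`. -/
abbrev FICon : Type := {c : Con F // IsFullyInvariant c}

/-- The smallest fully invariant congruence containing a set of pairs of words. -/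
def fiGen (S : Set (F × F)) : Con F :=
  sInf {c : Con F | IsFullyInvariant c ∧ ∀ p ∈ S, c p.1 p.2}

lemma fiGen_apply (S : Set (F × F)) (u v : F) :
    fiGen S u v ↔ ∀ c : Con F, (IsFullyInvariant c ∧ ∀ p ∈ S, c p.1 p.2) → c u v :=
  ⟨fun h c hc => h c hc, fun h c hc => h c hc⟩

lemma isFullyInvariant_fiGen (S : Set (F × F)) : IsFullyInvariant (fiGen S) := by
  intro f u v h
  rw [fiGen_apply] at h ⊢
  exact fun c hc => hc.1 f u v (h c hc)

/-- The fully invariant closure of a congruence, as an element of `FICon`. -/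
def fiCl (c : Con F) : FICon :=
  ⟨fiGen {p | c p.1 p.2}, isFullyInvariant_fiGen _⟩

lemma le_fiCl (c : Con F) : c ≤ (fiCl c).val := by
  refine le_sInf fun b hb => ?_
  rw [Con.le_def]
  exact fun {u v} huv => hb.2 (u, v) huv

lemma fiGC : GaloisConnection fiCl (Subtype.val : FICon → Con F) := by
  intro c d
  constructor
  · exact fun h => le_trans (le_fiCl c) h
  · intro h
    have hle : (fiCl c).val ≤ d.val :=
      sInf_le ⟨d.2, fun p hp => (Con.le_def.mp h) hp⟩
    exact hle

/-- The Galois insertion between congruences and fully invariant congruences. -/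
def fiGI : GaloisInsertion fiCl (Subtype.val : FICon → Con F) :=
  fiGC.toGaloisInsertion fun d => le_fiCl d.val

noncomputable instance : CompleteLattice FICon := fiGI.liftCompleteLattice

/-- The lattice of monoid varieties: the order dual of the lattice of fully
invariant congruences on the free monoid `F`. -/
abbrev MON : Type := FIConᵒᵈ

/-- The monoid variety given by the identity system `S`. -/
def gen (S : Set (F × F)) : MON :=
  OrderDual.toDual ⟨fiGen S, isFullyInvariant_fiGen S⟩

/-- The fully invariant congruence (equational theory) of a monoid variety. -/
def theta (V : MON) : Con F := (OrderDual.ofDual V).val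

/-- Fixed pairwise distinct letters. -/
def x : F := FreeMonoid.of 0
def y : F := FreeMonoid.of 1
def z : F := FreeMonoid.of 2
def r : F := FreeMonoid.of 3

/-- The content of a word: the set of letters occurring in it. -/
def con (w : F) : Set ℕ := {a | a ∈ FreeMonoid.toList w}

/-- The set of letters that are simple in a word (occur exactly once). -/
def simpleIn (w : F) : Set ℕ := {a | (FreeMonoid.toList w).count a = 1}

/-- Neutral element of a lattice. -/
def IsNeutralElt {L : Type*} [Lattice L] (a : L) : Prop :=
  ∀ y z : L, (a ⊔ y) ⊓ (y ⊔ z) ⊓ (z ⊔ a) = (a ⊓ y) ⊔ (y ⊓ z) ⊔ (z ⊓ a)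

/-- Costandard element of a lattice. -/
def IsCostandardElt {L : Type*} [Lattice L] (a : L) : Prop :=
  ∀ y z : L, (a ⊓ y) ⊔ z = (a ⊔ z) ⊓ (y ⊔ z)

/-- Codistributive element of a lattice. -/
def IsCodistributiveElt {L : Type*} [Lattice L] (a : L) : Prop :=
  ∀ y z : L, a ⊓ (y ⊔ z) = (a ⊓ y) ⊔ (a ⊓ z)

/-- Modular element of a lattice. -/
def IsModularElt {L : Type*} [Lattice L] (a : L) : Prop :=
  ∀ y z : L, y ≤ z → (a ⊔ y) ⊓ z = (a ⊓ z) ⊔ y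

/-- Upper-modular element of a lattice. -/
def IsUpperModularElt {L : Type*} [Lattice L] (a : L) : Prop :=
  ∀ y z : L, y ≤ a → a ⊓ (y ⊔ z) = y ⊔ (a ⊓ z)

/-- Lower-modular element of a lattice. -/
def IsLowerModularElt {L : Type*} [Lattice L] (a : L) : Prop :=
  ∀ y z : L, a ≤ y → a ⊔ (y ⊓ z) = y ⊓ (a ⊔ z)

/-- The variety `SL` of semilattice monoids. -/
def SLv : MON := gen {(x*x, x), (x*y, y*x)}

/-- The variety `C₂`. -/
def C2v : MON := gen {(x*x, x*x*x), (x*y, y*x)}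

/-- The variety `Cₙ`. -/
def Cv (n : ℕ) : MON := gen {(x^n, x^(n+1)), (x*y, y*x)}

/-- The variety `Aₙ` of Abelian groups of exponent dividing `n`. -/
def Av (n : ℕ) : MON := gen {(x^n, 1), (x*y, y*x)}

/-- The variety `D`. -/
def Dv : MON := gen {(x*x, x*x*x), (x*x*y, x*y*x), (x*y*x, y*x*x)}

/-- The variety `B₂,₃`. -/
def Bv : MON := gen {(x*x, x*x*x)}

/-- The word `s = yxyzxz`. -/
def s : F := y*x*y*z*x*z

/-- The word `t = yxzxyxz`. -/
def t : F := y*x*z*x*y*x*z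

/-- The variety `Q`. -/
def Qv : MON := gen {(s, t)}

/-- The variety `F` (denoted `Fv` to avoid a clash with the free monoid). -/
def Fv : MON :=
  gen {(x*y*x, x*y*x*x), (x*x*y*y, y*y*x*x), (x*x*y, x*x*y*x), (x*y*r*x*y, y*x*r*x*y)}

/-! ### Content of words and letter-erasing substitutions -/

lemma mem_con_mul (a : ℕ) (u v : F) : a ∈ con (u * v) ↔ a ∈ con u ∨ a ∈ con v := by
  simp [con]

lemma con_mul (u v : F) : con (u * v) = con u ∪ con v := by
  ext a; simp [mem_con_mul]

lemma con_one : con (1 : F) = ∅ := by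
  ext a; simp [con]

lemma con_of (a : ℕ) : con (FreeMonoid.of a) = {a} := by
  ext b; simp [con]

lemma con_pow (w : F) {n : ℕ} (hn : 0 < n) : con (w ^ n) = con w := by
  induction n, hn using Nat.le_induction with
  | base => simp
  | succ k _ ih => rw [pow_succ, con_mul, ih, Set.union_self]

lemma con_map (f : F →* F) (u : F) : con (f u) = ⋃ a ∈ con u, con (f (FreeMonoid.of a)) := by
  induction u using FreeMonoid.recOn with
  | one => simp [con_one]
  | of_mul a u ih => rw [map_mul, con_mul, ih, con_mul, con_of, Set.biUnion_union]; simp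

/-- The endomorphism replacing the letter `a` by `w` and erasing all other letters. -/
noncomputable def focus (a : ℕ) (w : F) : F →* F :=
  FreeMonoid.lift fun b => if b = a then w else 1

lemma focus_apply (a : ℕ) (w u : F) :
    focus a w u = w ^ (FreeMonoid.toList u).count a := by
  induction u using FreeMonoid.recOn with
  | one => simp
  | of_mul b u ih =>
    rw [map_mul, ih, focus, FreeMonoid.lift_eval_of]
    by_cases h : b = a
    · simp [h, pow_succ']
    · simp [h]

open Classical in
/-- The endomorphism erasing all letters outside `S`. -/
noncomputable def restr (S : Set ℕ) : F →* F :=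
  FreeMonoid.lift fun b => if b ∈ S then FreeMonoid.of b else 1

lemma restr_eq_self (S : Set ℕ) (u : F) (h : con u ⊆ S) : restr S u = u := by
  induction u using FreeMonoid.recOn with
  | one => simp
  | of_mul b u ih =>
    rw [con_mul, con_of, Set.union_subset_iff, Set.singleton_subset_iff] at h
    rw [map_mul, ih h.2, restr, FreeMonoid.lift_eval_of, if_pos h.1]

lemma con_restr (S : Set ℕ) (u : F) : con (restr S u) ⊆ S := by
  rw [con_map]
  refine Set.iUnion₂_subset fun a _ => ?_
  rw [restr, FreeMonoid.lift_eval_of]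
  split_ifs with h
  · simpa [con_of] using h
  · simp [con_one]

/-! ### The congruence of `SL` -/

/-- The congruence relating words with equal content. -/
def contentCon : Con F where
  r u v := con u = con v
  iseqv := ⟨fun _ => rfl, fun h => h.symm, fun h h' => h.trans h'⟩
  mul' h h' := by
    rw [con_mul, con_mul]
    exact congrArg₂ _ h h'

lemma contentCon_fi : IsFullyInvariant contentCon := by
  intro f u v (h : con u = con v)
  change con (f u) = con (f v)
  rw [con_map, con_map f v, h]

/-- The fully invariant congruence underlying `SLv`. -/
def sig : FICon := ⟨fiGen {(x*x, x), (x*y, y*x)}, isFullyInvariant_fiGen _⟩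

lemma sig_sq (w : F) : sig.1 (w * w) w := by
  have h : sig.1 (x * x) x := (fiGen_apply _ _ _).2 fun c hc => hc.2 (x * x, x) (by simp)
  simpa [x] using sig.2 (FreeMonoid.lift fun _ => w) _ _ h

lemma sig_comm (u v : F) : sig.1 (u * v) (v * u) := by
  have h : sig.1 (x * y) (y * x) :=
    (fiGen_apply _ _ _).2 fun c hc => hc.2 (x * y, y * x) (by simp)
  simpa [x, y] using sig.2 (FreeMonoid.lift fun i => if i = 0 then u else v) _ _ h

lemma sig_absorb (u v : F) (h : con v ⊆ con u) : sig.1 (u * v) u := by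
  induction v using FreeMonoid.recOn with
  | one => simpa using sig.1.refl u
  | of_mul a v ih =>
    rw [con_mul, con_of, Set.union_subset_iff, Set.singleton_subset_iff] at h
    have ha : sig.1 (u * FreeMonoid.of a) u := by
      obtain ⟨p, q, hpq⟩ := List.append_of_mem (show a ∈ FreeMonoid.toList u from h.1)
      have hu : u = FreeMonoid.ofList p * (FreeMonoid.of a * FreeMonoid.ofList q) := by
        apply FreeMonoid.toList.injective
        simpa using hpq
      rw [hu, mul_assoc, mul_assoc]
      refine sig.1.mul (sig.1.refl _) (sig.1.trans
        (sig.1.mul (sig.1.refl _) (sig_comm _ _)) ?_)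
      rw [← mul_assoc]
      exact sig.1.mul (sig_sq _) (sig.1.refl _)
    rw [← mul_assoc]
    exact sig.1.trans (sig.1.mul ha (sig.1.refl _)) (ih h.2)

lemma sig_iff (u v : F) : sig.1 u v ↔ con u = con v := by
  constructor
  · intro h
    refine (fiGen_apply _ _ _).1 h contentCon ⟨contentCon_fi, ?_⟩
    rintro p (rfl | rfl)
    · change con _ = con _
      rw [con_mul, Set.union_self]
    · change con _ = con _
      rw [con_mul, con_mul, Set.union_comm]
  · intro h
    exact sig.1.trans (sig.1.symm (sig_absorb u v h.ge))
      (sig.1.trans (sig_comm _ _) (sig_absorb v u h.le))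

/-! ### Neutrality -/

lemma ficon_le {b c : FICon} (h : b ≤ c) {u v : F} (huv : b.1 u v) : c.1 u v :=
  Con.le_def.mp (show b.1 ≤ c.1 from h) huv

lemma ficon_le_of {b c : FICon} (h : ∀ u v, b.1 u v → c.1 u v) : b ≤ c :=
  show b.1 ≤ c.1 from Con.le_def.mpr fun {u v} => h u v

lemma ficon_inf {b c : FICon} {u v : F} : (b ⊓ c).1 u v ↔ b.1 u v ∧ c.1 u v := by
  constructor
  · exact fun h => ⟨ficon_le inf_le_left h, ficon_le inf_le_right h⟩
  · intro h
    let e : FICon := ⟨b.1 ⊓ c.1, fun f u v huv => ⟨b.2 f u v huv.1, c.2 f u v huv.2⟩⟩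
    have he : e ≤ b ⊓ c := le_inf (ficon_le_of fun _ _ h => h.1) (ficon_le_of fun _ _ h => h.2)
    exact ficon_le he h

lemma exists_pow_of_not_le {c : FICon} (h : ¬ c ≤ sig) :
    ∃ n, 0 < n ∧ ∀ w : F, c.1 (w ^ n) 1 := by
  have aux : ∀ u v, c.1 u v → ¬ con u ⊆ con v → ∃ n, 0 < n ∧ ∀ w : F, c.1 (w ^ n) 1 := by
    intro u v huv hs
    obtain ⟨a, hau, hav⟩ := Set.not_subset.mp hs
    refine ⟨_, List.count_pos_iff.mpr hau, fun w => ?_⟩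
    have := c.2 (focus a w) u v huv
    rwa [focus_apply, focus_apply, List.count_eq_zero.mpr hav, pow_zero] at this
  by_contra hn
  refine h (ficon_le_of fun u v huv => (sig_iff u v).2 (Set.Subset.antisymm ?_ ?_))
  · by_contra hs
    exact hn (aux u v huv hs)
  · by_contra hs
    exact hn (aux v u (c.1.symm huv) hs)

/-- If neither `b` nor `c` is below `sig`, every pair of `b` already lies in
`(sig ⊓ b) ⊔ (b ⊓ c)`. -/
lemma both_case {b c : FICon} (hb : ¬ b ≤ sig) (hc : ¬ c ≤ sig) :
    b ≤ (sig ⊓ b) ⊔ (b ⊓ c) := by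
  obtain ⟨n, hn, hbn⟩ := exists_pow_of_not_le hb
  obtain ⟨m, hm, hcm⟩ := exists_pow_of_not_le hc
  have hk : ∀ w : F, (b ⊓ c).1 (w ^ (n * m)) 1 := fun w => ficon_inf.2
    ⟨by rw [mul_comm, pow_mul]; exact hbn _, by rw [pow_mul]; exact hcm _⟩
  have hpos : 0 < n * m := Nat.mul_pos hn hm
  refine ficon_le_of fun u v huv => ?_
  set d := (sig ⊓ b) ⊔ (b ⊓ c) with hd
  have h1 : ∀ p w : F, d.1 (p * w ^ (n * m)) p := fun p w => by
    have := ficon_le (le_sup_right : b ⊓ c ≤ d) ((b ⊓ c).1.mul ((b ⊓ c).1.refl p) (hk w))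
    rwa [mul_one] at this
  have h2 : d.1 (u * (u * v) ^ (n * m)) (v * (u * v) ^ (n * m)) := by
    refine ficon_le (le_sup_left : sig ⊓ b ≤ d) (ficon_inf.2 ⟨(sig_iff _ _).2 ?_, ?_⟩)
    · simp only [con_mul, con_pow _ hpos]
      grind
    · exact b.1.mul huv (b.1.refl _)
  exact d.1.trans (d.1.symm (h1 _ _)) (d.1.trans h2 (h1 _ _))

/-- The relation `u wⁿ d v wⁿ` for some word `w`. When `d` contains every pair `(p, q)` of equal
content that is related by a congruence `c` satisfying `wⁿ = 1`, it is a congruence, because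
modulo `d` the words `wⁿ` then commute with everything and `wⁿ tⁿ = (w t)ⁿ`. -/
def twistCon (c d : FICon) (n : ℕ) (hn : 0 < n) (hc : ∀ w : F, c.1 (w ^ n) 1)
    (hd : ∀ p q, c.1 p q → con p = con q → d.1 p q) : Con F :=
  have comm : ∀ p w, d.1 (p * w ^ n) (w ^ n * p) := fun p w => hd _ _
    (by simpa using c.1.trans (c.1.mul (c.1.refl p) (hc w))
          (by simpa using c.1.symm (c.1.mul (hc w) (c.1.refl p))))
    (by rw [con_mul, con_mul, Set.union_comm])
  have pow : ∀ w t, d.1 (w ^ n * t ^ n) ((w * t) ^ n) := fun w t => hd _ _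
    (c.1.trans (by simpa using c.1.mul (hc w) (hc t)) (c.1.symm (hc _)))
    (by simp only [con_mul, con_pow _ hn])
  { r := fun u v => ∃ w, d.1 (u * w ^ n) (v * w ^ n)
    iseqv := by
      refine ⟨fun u => ⟨1, d.1.refl _⟩, fun ⟨w, h⟩ => ⟨w, d.1.symm h⟩, ?_⟩
      rintro u v p ⟨w, hw⟩ ⟨t, ht⟩
      refine ⟨w * t, ?_⟩
      simp only [← d.1.eq, Con.coe_mul] at *
      rw [← pow, ← mul_assoc, hw, mul_assoc, comm (w ^ n) t, ← mul_assoc, ht, mul_assoc]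
    mul' := by
      rintro u₁ v₁ u₂ v₂ ⟨w, hw⟩ ⟨t, ht⟩
      refine ⟨w * t, ?_⟩
      simp only [← d.1.eq, Con.coe_mul] at *
      have key : ∀ a b : F, (a * b * ((w ^ n : F) * (t ^ n : F)) : d.1.Quotient) =
          (a * (w ^ n : F)) * (b * (t ^ n : F)) := fun a b => by
        rw [mul_assoc, ← mul_assoc (b : d.1.Quotient), comm b w]
        simp only [mul_assoc]
      rw [← pow, key, key, hw, ht] }

/-- When `b ≤ sig` this is the nontrivial half of the modular law. -/
lemma mixed_case {b c : FICon} (hc : ¬ c ≤ sig) :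
    sig ⊓ (b ⊔ c) ≤ b ⊔ (c ⊓ sig) := by
  obtain ⟨n, hn, hcn⟩ := exists_pow_of_not_le hc
  set d := b ⊔ (c ⊓ sig) with hd
  have hcd : ∀ p q, c.1 p q → con p = con q → d.1 p q := fun p q h h' =>
    ficon_le (le_sup_right : c ⊓ sig ≤ d) (ficon_inf.2 ⟨h, (sig_iff _ _).2 h'⟩)
  let e : FICon := ⟨twistCon c d n hn hcn hcd, by
    rintro f u v ⟨w, hw⟩
    refine ⟨f w, ?_⟩
    simpa using d.2 f _ _ hw⟩
  have hbe : b ≤ e := ficon_le_of fun u v h =>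
    ⟨1, by simpa using ficon_le (le_sup_left : b ≤ d) h⟩
  have hce : c ≤ e := ficon_le_of fun u v h => ⟨u * v, hcd _ _ (c.1.mul h (c.1.refl _)) (by
    simp only [con_mul, con_pow _ hn]
    grind)⟩
  refine ficon_le_of fun u v h => ?_
  obtain ⟨h1, h2⟩ := ficon_inf.1 h
  rw [sig_iff] at h1
  obtain ⟨w, hw⟩ := ficon_le (sup_le hbe hce) h2
  -- erase the letters of `w` outside the common content of `u` and `v`
  have hw' := d.2 (restr (con u)) _ _ hw
  rw [map_mul, map_mul (restr (con u)) v, map_pow, restr_eq_self _ u subset_rfl, restr_eq_self _ v h1.ge] at hw'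
  have absorb : ∀ p, con p = con u → d.1 (p * restr (con u) w ^ n) p := fun p hp =>
    hcd _ _ (by simpa using c.1.mul (c.1.refl p) (hcn (restr (con u) w))) (by
      rw [con_mul, con_pow _ hn, hp, Set.union_eq_left]
      exact con_restr _ _)
  exact d.1.trans (d.1.symm (absorb u rfl)) (d.1.trans hw' (absorb v h1.symm))

lemma sig_median (b c : FICon) :
    (sig ⊔ b) ⊓ (b ⊔ c) ⊓ (c ⊔ sig) ≤ (sig ⊓ b) ⊔ (b ⊓ c) ⊔ (c ⊓ sig) := by
  by_cases hb : b ≤ sig <;> by_cases hc : c ≤ sig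
  · rw [inf_eq_right.2 hb, inf_eq_left.2 hc]
    exact (inf_le_left.trans inf_le_right).trans
      (sup_le (le_sup_left.trans le_sup_left) le_sup_right)
  · rw [inf_eq_right.2 hb, sup_eq_left.2 hb]
    exact inf_le_left.trans ((mixed_case hc).trans (sup_le_sup_right le_sup_left _))
  · rw [inf_eq_left.2 hc, sup_eq_right.2 hc]
    refine (le_inf inf_le_right (inf_le_left.trans inf_le_right)).trans ?_
    rw [sup_comm b c]
    refine (mixed_case hb).trans (sup_le le_sup_right ?_)
    rw [inf_comm b sig]
    exact le_sup_left.trans le_sup_left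
  · refine (inf_le_left.trans inf_le_right).trans (sup_le ?_ ?_)
    · exact (both_case hb hc).trans le_sup_left
    · refine (both_case hc hb).trans (sup_le ?_ ?_)
      · rw [inf_comm]; exact le_sup_right
      · rw [inf_comm]; exact le_sup_right.trans le_sup_left

lemma median_le {L : Type*} [Lattice L] (a b c : L) :
    (a ⊓ b) ⊔ (b ⊓ c) ⊔ (c ⊓ a) ≤ (a ⊔ b) ⊓ (b ⊔ c) ⊓ (c ⊔ a) := by
  refine sup_le (sup_le ?_ ?_) ?_ <;> refine le_inf (le_inf ?_ ?_) ?_ <;>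
    first
    | exact inf_le_left.trans le_sup_left
    | exact inf_le_left.trans le_sup_right
    | exact inf_le_right.trans le_sup_left

theorem statement4 :
    IsNeutralElt (⊥ : MON) ∧ IsNeutralElt SLv ∧ IsNeutralElt (⊤ : MON) := by
  refine ⟨fun b c => ?_, fun b c => le_antisymm ?_ (median_le _ _ _), fun b c => ?_⟩
  · simp only [bot_sup_eq, sup_bot_eq, bot_inf_eq, inf_bot_eq]
    exact le_antisymm (le_inf (inf_le_left.trans inf_le_left) inf_le_right)
      (le_inf (le_inf inf_le_left (inf_le_left.trans le_sup_left)) inf_le_right)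
  · exact sig_median (OrderDual.ofDual b) (OrderDual.ofDual c)
  · simp only [top_sup_eq, sup_top_eq, top_inf_eq, inf_top_eq]
    exact le_antisymm (sup_le (le_sup_left.trans le_sup_left) le_sup_right)
      (sup_le (sup_le le_sup_left (inf_le_left.trans le_sup_left)) le_sup_right)
end

section
/- Let A be an atom of the lattice MON of monoid varieties, and let X, Y ∈ MON. If A ≰ X and A ≰ Y, then A ≰ X ⊔ Y. -/
/-- The endomorphism sending the letter `i` to `w` and erasing all other letters. -/
def keep (i : ℕ) (w : F) : F →* F := FreeMonoid.lift fun j => if j = i then w else 1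

lemma keep_apply (i : ℕ) (w u : F) :
    keep i w u = w ^ (FreeMonoid.toList u).count i := by
  induction u using FreeMonoid.inductionOn' with
  | one => simp
  | of_mul j u ih =>
    rw [map_mul, ih]
    by_cases h : j = i
    · simp [keep, h, pow_succ']
    · simp [keep, h]

lemma count_pow (u : F) (i k : ℕ) :
    (FreeMonoid.toList (u ^ k)).count i = k * (FreeMonoid.toList u).count i := by
  induction k with
  | zero => simp
  | succ k ih => rw [pow_succ, FreeMonoid.toList_mul, List.count_append, ih]; ring

/-- The congruence relating words in which every letter occurs an `R`-equivalent number of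
times. -/
def countCon (R : RingCon ℕ) : Con F where
  r u v := ∀ i, R ((FreeMonoid.toList u).count i) ((FreeMonoid.toList v).count i)
  iseqv := ⟨fun _ _ => R.refl _, fun h i => R.symm (h i), fun h k i => R.trans (h i) (k i)⟩
  mul' h k i := by
    simp only [FreeMonoid.toList_mul, List.count_append]
    exact R.add (h i) (k i)

lemma countCon_iff (R : RingCon ℕ) (u v : F) : countCon R u v ↔
    ∀ i, R ((FreeMonoid.toList u).count i) ((FreeMonoid.toList v).count i) := Iff.rfl

/-- The number of occurrences of `i` in `f u` depends linearly on the letter counts of `u`. -/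
lemma count_map (f : F →* F) (u : F) (i : ℕ) (s : Finset ℕ)
    (hs : ∀ j ∈ FreeMonoid.toList u, j ∈ s) :
    (FreeMonoid.toList (f u)).count i = ∑ j ∈ s, (FreeMonoid.toList u).count j *
      (FreeMonoid.toList (f (FreeMonoid.of j))).count i := by
  induction u using FreeMonoid.inductionOn' with
  | one => simp
  | of_mul k u ih =>
    rw [map_mul, FreeMonoid.toList_mul, List.count_append, ih fun j hj => hs j (by simp [hj])]
    have hk : k ∈ s := hs k (by simp)
    simp only [FreeMonoid.toList_mul, FreeMonoid.toList_of, List.count_append, add_mul,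
      Finset.sum_add_distrib]
    congr 1
    rw [Finset.sum_eq_single k]
    · simp
    · intro j _ hj
      simp [Ne.symm hj]
    · exact fun h => absurd hk h

lemma isFullyInvariant_countCon (R : RingCon ℕ) : IsFullyInvariant (countCon R) := by
  intro f u v h i
  classical
  let s := (FreeMonoid.toList u).toFinset ∪ (FreeMonoid.toList v).toFinset
  rw [count_map f u i s (by simp +contextual [s]), count_map f v i s (by simp +contextual [s])]
  induction s using Finset.induction_on with
  | empty => simpa using R.refl 0
  | insert a s ha ih =>
    rw [Finset.sum_insert ha, Finset.sum_insert ha]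
    exact R.add (R.mul (h a) (R.refl _)) ih

lemma le_iff (V W : MON) : V ≤ W ↔ ∀ u v, theta W u v → theta V u v :=
  ⟨fun h _ _ => Con.le_def.mp h, fun h => Con.le_def.mpr fun {u v} => h u v⟩

lemma theta_fi (V : MON) : IsFullyInvariant (theta V) := (OrderDual.ofDual V).2

lemma theta_bot (u v : F) : theta ⊥ u v :=
  (le_iff ⊥ (OrderDual.toDual ⟨⊤, fun _ _ _ _ => trivial⟩)).1 bot_le u v trivial

/-- An atom does not satisfy `x ≈ 1`. -/
lemma not_theta_one (A : MON) (hA : IsAtom A) : ¬ theta A x 1 := by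
  intro h
  apply hA.1
  refine le_antisymm ((le_iff _ _).2 fun u v _ => ?_) bot_le
  have key (w : F) : theta A w 1 := by
    simpa [x, keep] using theta_fi A (keep 0 w) _ _ h
  exact (theta A).trans (key u) ((theta A).symm (key v))

lemma theta_eq_countCon (A : MON) (hA : IsAtom A) (R : RingCon ℕ) (hR : ¬ R 1 0)
    (h : ∀ a b : ℕ, theta A (x ^ a) (x ^ b) → R a b) : theta A = countCon R := by
  let T : MON := OrderDual.toDual ⟨countCon R, isFullyInvariant_countCon R⟩
  have hT : T ≤ A := (le_iff _ _).2 fun u v huv i => h _ _ (by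
    simpa only [keep_apply] using theta_fi A (keep i x) _ _ huv)
  rcases hT.lt_or_eq with hlt | heq
  · have h0 := theta_bot x 1
    rw [← hA.2 T hlt] at h0
    exact absurd (by simpa [x] using (countCon_iff R _ _).1 h0 0) hR
  · rw [← heq]; rfl

/-- The semiring congruence on `ℕ` with classes `{0}` and the positive numbers. -/
def zeroCon : RingCon ℕ where
  r a b := a = 0 ↔ b = 0
  iseqv := ⟨fun _ => Iff.rfl, fun h => h.symm, fun h k => h.trans k⟩
  mul' h k := by simp only [Nat.mul_eq_zero, h, k]
  add' h k := by simp only [Nat.add_eq_zero_iff, h, k]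

/-- Congruence modulo `p` on `ℕ`, as a semiring congruence. -/
def modCon (p : ℕ) : RingCon ℕ where
  r a b := a ≡ b [MOD p]
  iseqv := ⟨fun _ => rfl, fun h => h.symm, fun h k => h.trans k⟩
  mul' h k := Nat.ModEq.mul h k
  add' h k := Nat.ModEq.add h k

lemma zeroCon_iff (a b : ℕ) : zeroCon a b ↔ (a = 0 ↔ b = 0) := Iff.rfl

lemma modCon_iff (p a b : ℕ) : modCon p a b ↔ a ≡ b [MOD p] := Iff.rfl

/-- Primality of a semiring congruence on `ℕ`, with respect to the twisted product of pairs
(over a ring it says that `(a - b) * (c - e)` vanishes only if a factor does). -/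
def IsPrimeCon (R : RingCon ℕ) : Prop :=
  ∀ a b c e : ℕ, R (a * c + b * e) (a * e + b * c) → R a b ∨ R c e

lemma isPrimeCon_zeroCon : IsPrimeCon zeroCon := by
  intro a b c e h
  simp only [zeroCon_iff, Nat.add_eq_zero_iff, Nat.mul_eq_zero] at h ⊢
  tauto

lemma isPrimeCon_modCon (p : ℕ) (hp : p.Prime) : IsPrimeCon (modCon p) := by
  intro a b c e h
  have := Fact.mk hp
  simp only [modCon_iff, ← ZMod.natCast_eq_natCast_iff] at h ⊢
  push_cast at h
  have : ((a : ZMod p) - b) * (c - e) = 0 := by linear_combination h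
  rcases mul_eq_zero.1 this with h | h
  · exact Or.inl (sub_eq_zero.1 h)
  · exact Or.inr (sub_eq_zero.1 h)

/-- If `x ^ d ≈ 1` with `d > 0` minimal, identities `x ^ a ≈ x ^ b` force `a ≡ b` modulo `d`. -/
lemma modEq_of_theta (A : MON) (d : ℕ) (hd : 0 < d) (h : theta A (x ^ d) 1)
    (hmin : ∀ n, 0 < n → theta A (x ^ n) 1 → d ≤ n) (a b : ℕ)
    (hab : theta A (x ^ a) (x ^ b)) : a ≡ b [MOD d] := by
  have hmul (k : ℕ) : theta A (x ^ (d * k)) 1 := by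
    rw [pow_mul]; simpa using (theta A).pow k h
  have hmod (n : ℕ) : theta A (x ^ n) (x ^ (n % d)) := by
    conv_lhs => rw [← Nat.mod_add_div n d, pow_add]
    simpa using (theta A).mul ((theta A).refl (x ^ (n % d))) (hmul (n / d))
  have hdvd (n : ℕ) (hn : theta A (x ^ n) 1) : d ∣ n := by
    by_contra hnd
    have h1 := hmin (n % d) (Nat.pos_of_ne_zero fun h0 => hnd (Nat.dvd_of_mod_eq_zero h0))
      ((theta A).trans ((theta A).symm (hmod n)) hn)
    exact absurd (Nat.mod_lt n hd) (not_lt.2 h1)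
  -- `x ^ (d * b - b)` is an inverse of `x ^ b`
  have hb : d * b - b + b = d * b := Nat.sub_add_cancel (Nat.le_mul_of_pos_left b hd)
  have h2 : theta A (x ^ (d * b - b + a)) 1 := by
    have h3 := (theta A).mul ((theta A).refl (x ^ (d * b - b))) hab
    rw [← pow_add, ← pow_add, hb] at h3
    exact (theta A).trans h3 (hmul b)
  have h4 : d * b - b + a ≡ d * b - b + b [MOD d] := by
    rw [hb]
    exact ((Nat.modEq_zero_iff_dvd.2 (hdvd _ h2))).trans
      (Nat.modEq_zero_iff_dvd.2 (dvd_mul_right d b)).symm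
  exact Nat.ModEq.add_left_cancel' _ h4

lemma exists_primeCon (A : MON) (hA : IsAtom A) :
    ∃ R : RingCon ℕ, IsPrimeCon R ∧ theta A = countCon R := by
  classical
  by_cases hn : ∃ n, 0 < n ∧ theta A (x ^ n) 1
  · obtain ⟨hd, h⟩ := Nat.find_spec hn
    have hmin (n : ℕ) (h0 : 0 < n) (h1 : theta A (x ^ n) 1) : Nat.find hn ≤ n :=
      Nat.find_min' hn ⟨h0, h1⟩
    generalize Nat.find hn = d at hd h hmin
    have hd1 : d ≠ 1 := by
      rintro rfl
      exact not_theta_one A hA (by simpa using h)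
    have hp := Nat.minFac_prime hd1
    refine ⟨modCon d.minFac, isPrimeCon_modCon _ hp, theta_eq_countCon A hA _ ?_ ?_⟩
    · rw [modCon_iff, Nat.modEq_zero_iff_dvd]
      exact hp.not_dvd_one
    · exact fun a b hab => (modEq_of_theta A d hd h hmin a b hab).of_dvd (Nat.minFac_dvd d)
  · refine ⟨zeroCon, isPrimeCon_zeroCon, theta_eq_countCon A hA _ (by simp [zeroCon_iff]) ?_⟩
    intro a b hab
    have key (n : ℕ) (h : theta A (x ^ n) 1) : n = 0 := by
      by_contra h0
      exact hn ⟨n, Nat.pos_of_ne_zero h0, h⟩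
    constructor
    · rintro rfl
      exact key b ((theta A).symm (by simpa using hab))
    · rintro rfl
      exact key a (by simpa using hab)

lemma exists_pow_of_not_le_s5 (A X : MON) (R : RingCon ℕ) (hR : theta A = countCon R)
    (h : ¬ A ≤ X) : ∃ a b : ℕ, theta X (x ^ a) (x ^ b) ∧ ¬ R a b := by
  rw [le_iff, hR] at h
  simp only [countCon_iff] at h
  push Not at h
  obtain ⟨u, v, huv, i, hi⟩ := h
  exact ⟨_, _, by simpa only [keep_apply] using theta_fi X (keep i x) _ _ huv, hi⟩

/-- The twisted product of a pair of exponents with any pair stays in a one-letter theory. -/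
lemma theta_twist (V : MON) (a b c e : ℕ) (h : theta V (x ^ a) (x ^ b)) :
    theta V (x ^ (a * c + b * e)) (x ^ (a * e + b * c)) := by
  rw [add_comm (a * e), pow_add, pow_add, pow_mul, pow_mul, pow_mul, pow_mul]
  exact (theta V).mul ((theta V).pow c h) ((theta V).pow e ((theta V).symm h))

theorem statement5 (A X Y : MON) (hA : IsAtom A) (hX : ¬ A ≤ X) (hY : ¬ A ≤ Y) :
    ¬ A ≤ X ⊔ Y := by
  intro hle
  obtain ⟨R, hprime, hR⟩ := exists_primeCon A hA
  obtain ⟨a, b, hab, hab'⟩ := exists_pow_of_not_le_s5 A X R hR hX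
  obtain ⟨c, e, hce, hce'⟩ := exists_pow_of_not_le_s5 A Y R hR hY
  let Z : MON := OrderDual.toDual ⟨theta X ⊓ theta Y,
    fun f u v h => ⟨theta_fi X f u v h.1, theta_fi Y f u v h.2⟩⟩
  have hZ : X ⊔ Y ≤ Z :=
    sup_le ((le_iff _ _).2 fun u v h => h.1) ((le_iff _ _).2 fun u v h => h.2)
  have hY2 : theta Y (x ^ (a * c + b * e)) (x ^ (a * e + b * c)) := by
    have := theta_twist Y c e a b hce
    rwa [mul_comm c a, mul_comm e b, mul_comm c b, mul_comm e a, add_comm (b * c)] at this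
  have h := (le_iff _ _).1 (hle.trans hZ) _ _ ⟨theta_twist X a b c e hab, hY2⟩
  rw [hR] at h
  have h0 := (countCon_iff R _ _).1 h 0
  rw [count_pow, count_pow] at h0
  simp only [x, FreeMonoid.toList_of, List.count_singleton_self, mul_one] at h0
  exact (hprime a b c e h0).elim hab' hce'
end

section
/- The smallest fully invariant congruence on F containing {(x², x³), (xy, yx)} (the equational theory of the variety C₂) is exactly the set of all pairs (u, v) of words such that con(u) = con(v) and the set of letters simple in u equals the set of letters simple in v. -/
/-- Equality of natural numbers after capping at `2`, as a congruence on `(ℕ, +)` written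
multiplicatively. -/
def capNat : Con (Multiplicative ℕ) where
  r m n := min m.toAdd 2 = min n.toAdd 2
  iseqv := ⟨fun _ => rfl, fun h => h.symm, fun h k => h.trans k⟩
  mul' := by
    intro a b c d h k
    simp only [toAdd_mul] at *
    omega

/-- The congruence on words relating `u` and `v` when every letter occurs equally often in both,
occurrence numbers being capped at `2`. -/
def capCon : Con F where
  r u v := ∀ a, min ((FreeMonoid.toList u).count a) 2 = min ((FreeMonoid.toList v).count a) 2
  iseqv := ⟨fun _ _ => rfl, fun h a => (h a).symm, fun h k a => (h a).trans (k a)⟩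
  mul' := by
    intro u v w t h k a
    have := h a
    have := k a
    simp only [FreeMonoid.toList_mul, List.count_append]
    omega

lemma capCon_def (u v : F) : capCon u v ↔
    ∀ a, min ((FreeMonoid.toList u).count a) 2 = min ((FreeMonoid.toList v).count a) 2 := Iff.rfl

lemma capCon_iff (u v : F) : capCon u v ↔ con u = con v ∧ simpleIn u = simpleIn v := by
  simp only [capCon_def, con, simpleIn, Set.ext_iff, Set.mem_ofPred_eq, ← forall_and,
    ← List.count_pos_iff]
  refine forall_congr' fun a => ?_
  omega

lemma pow_eq_of_min_eq {M : Type*} [Monoid M] {q : M} (hq : q ^ 2 = q ^ 3) {m n : ℕ}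
    (h : min m 2 = min n 2) : q ^ m = q ^ n := by
  have key : ∀ k, q ^ (k + 2) = q ^ 2 := by
    intro k
    induction k with
    | zero => rfl
    | succ k ih => rw [show k + 1 + 2 = (k + 2) + 1 by ring, pow_succ, ih, ← pow_succ, ← hq]
  by_cases hm : m < 2
  · rw [show m = n by omega]
  · obtain ⟨i, rfl⟩ := Nat.exists_eq_add_of_le' (not_lt.mp hm)
    obtain ⟨j, rfl⟩ := Nat.exists_eq_add_of_le' (show 2 ≤ n by omega)
    rw [key i, key j]

/-- Words related by `capCon` are identified by every homomorphism to a commutative monoid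
satisfying `q² = q³`. -/
lemma hom_eq_of_capCon {M : Type*} [CommMonoid M] (hM : ∀ q : M, q ^ 2 = q ^ 3) (g : F →* M)
    {u v : F} (h : capCon u v) : g u = g v := by
  have hg : ∀ w : F, g w = ∏ a ∈ (FreeMonoid.toList w).toFinset,
      g (FreeMonoid.of a) ^ (FreeMonoid.toList w).count a := by
    intro w
    rw [← Finset.prod_list_map_count]
    conv_lhs => rw [← FreeMonoid.lift_restrict g]
    rw [FreeMonoid.lift_apply]
    rfl
  have hs : (FreeMonoid.toList u).toFinset = (FreeMonoid.toList v).toFinset := by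
    ext a
    have := Set.ext_iff.mp ((capCon_iff u v).mp h).1 a
    simpa [con] using this
  rw [hg, hg, hs]
  exact Finset.prod_congr rfl fun a _ => pow_eq_of_min_eq (hM _) (h a)

lemma isFullyInvariant_capCon : IsFullyInvariant capCon := by
  intro f u v h a
  have hM : ∀ q : capNat.Quotient, q ^ 2 = q ^ 3 := by
    intro q
    induction q using Con.induction_on with
    | H n =>
      simp only [pow_succ, pow_zero, one_mul, ← Con.coe_mul, Con.eq]
      change min (n * n).toAdd 2 = min (n * n * n).toAdd 2
      simp only [toAdd_mul]
      omega
  have := hom_eq_of_capCon hM (capNat.mk'.comp ((FreeMonoid.count a).comp f)) h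
  simp only [MonoidHom.comp_apply, Con.coe_mk', Con.eq] at this
  exact this

theorem statement8 (u v : F) :
    fiGen {(x*x, x*x*x), (x*y, y*x)} u v ↔
      con u = con v ∧ simpleIn u = simpleIn v := by
  rw [← capCon_iff]
  constructor
  · intro h
    refine (fiGen_apply _ u v).mp h capCon ⟨isFullyInvariant_capCon, ?_⟩
    rintro p (rfl | rfl) a
    · simp only [x, FreeMonoid.toList_mul, FreeMonoid.toList_of, List.count_append,
        List.count_singleton]
      split <;> omega
    · simp only [FreeMonoid.toList_mul, List.count_append]
      omega
  · intro h
    rw [fiGen_apply]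
    rintro c ⟨hc, hS⟩
    have hxx : c (x*x) (x*x*x) := hS (x*x, x*x*x) (by simp)
    have hxy : c (x*y) (y*x) := hS (x*y, y*x) (by simp)
    -- Substituting arbitrary words for the letters transfers both identities to the quotient.
    have hcomm : ∀ p q : c.Quotient, p * q = q * p := by
      intro p q
      induction p, q using Con.induction_on₂ with
      | H p q =>
        rw [← Con.coe_mul, ← Con.coe_mul, Con.eq]
        simpa [x, y] using hc (FreeMonoid.lift fun n => if n = 0 then p else q) _ _ hxy
    have hpow : ∀ q : c.Quotient, q ^ 2 = q ^ 3 := by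
      intro q
      induction q using Con.induction_on with
      | H q =>
        simp only [pow_succ, pow_zero, one_mul, ← Con.coe_mul, Con.eq]
        simpa [x] using hc (FreeMonoid.lift fun _ => q) _ _ hxx
    let _ : CommMonoid c.Quotient := { (inferInstance : Monoid c.Quotient) with mul_comm := hcomm }
    exact (Con.eq c).mp (hom_eq_of_capCon hpow c.mk' h)
end

section
/- Let V be a commutative element of the lattice MON of monoid varieties ((xy, yx) ∈ θ_V) that contains a non-trivial group, i.e., A_n ≤ V for some n ≥ 2, where A_n = ⟪{(xⁿ,1),(xy,yx)}⟫. Then Q ⊔ (B ⊓ V) < B ⊓ (Q ⊔ V), where B = ⟪{(x²,x³)}⟫ and Q = ⟪{(s,t)}⟫ with s = yxyzxz and t = yxzxyxz. -/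
/-! ### Largest fully invariant congruence saturating a set -/

/-- The fully invariant syntactic congruence of a set of words `K`: the largest fully invariant
congruence for which `K` is a union of classes. -/
def synt (K : Set F) : Con F where
  r u v := ∀ (f : F →* F) (p q : F), p * f u * q ∈ K ↔ p * f v * q ∈ K
  iseqv :=
    { refl := fun _ _ _ _ => Iff.rfl
      symm := fun h f p q => (h f p q).symm
      trans := fun h h' f p q => (h f p q).trans (h' f p q) }
  mul' := by
    intro u v u' v' h h' f p q
    have h1 := h f p (f u' * q)
    have h2 := h' f (p * f v) q
    simp only [map_mul, mul_assoc] at h1 h2 ⊢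
    exact h1.trans h2

lemma synt_apply (K : Set F) (u v : F) :
    synt K u v ↔ ∀ (f : F →* F) (p q : F), p * f u * q ∈ K ↔ p * f v * q ∈ K := Iff.rfl

lemma synt_fi (K : Set F) : IsFullyInvariant (synt K) := by
  intro g u v h
  rw [synt_apply] at h ⊢
  exact fun f p q => h (f.comp g) p q

lemma synt_saturates {K : Set F} {u v : F} (h : synt K u v) : u ∈ K ↔ v ∈ K := by
  simpa using h (MonoidHom.id F) 1 1

/-! ### Equational theories and the order of `MON` -/

lemma le_iff_theta {V W : MON} : V ≤ W ↔ ∀ u v, theta W u v → theta V u v :=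
  ⟨fun h _ _ huv => Con.le_def.mp (show theta W ≤ theta V from h) huv,
   fun h => (Con.le_def.mpr (fun {u v} huv => h u v huv) : theta W ≤ theta V)⟩

lemma le_gen {V : MON} {S : Set (F × F)} (h : ∀ p ∈ S, theta V p.1 p.2) : V ≤ gen S :=
  le_iff_theta.mpr fun u v huv => (fiGen_apply S u v).mp huv (theta V) ⟨theta_fi V, h⟩

lemma theta_gen {S : Set (F × F)} {u v : F} (h : (u, v) ∈ S) : theta (gen S) u v :=
  (fiGen_apply S u v).mpr fun _ hc => hc.2 _ h

/-! ### Combinatorics of the words `s` and `t` -/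

/-- The letters of the word `s`. -/
abbrev sL : List ℕ := [1, 0, 1, 2, 0, 2]

/-- The letters of the word `t`. -/
abbrev tL : List ℕ := [1, 0, 2, 0, 1, 0, 2]

lemma squareFree_of_bounded {w : List ℕ}
    (hw : ∀ l < 4, 0 < l → ∀ i < 8, i + 2 * l ≤ w.length →
      (w.drop i).take l ≠ (w.drop (i + l)).take l)
    (hlen : w.length ≤ 7) {p u q : List ℕ} (h : p ++ (u ++ (u ++ q)) = w) : u = [] := by
  by_contra hu
  have hpos : 0 < u.length := List.length_pos_iff.mpr hu
  have hl := congrArg List.length h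
  simp only [List.length_append] at hl
  refine hw u.length (by omega) hpos p.length (by omega) (by omega) ?_
  subst h
  simp [← List.drop_drop]

lemma squareFree {w : List ℕ} (hw : w = sL ∨ w = tL) {p u q : List ℕ}
    (h : p ++ (u ++ (u ++ q)) = w) : u = [] := by
  rcases hw with rfl | rfl
  · exact squareFree_of_bounded (by decide) (by decide) h
  · exact squareFree_of_bounded (by decide) (by decide) h

/-- An instance of `s` inside `s` or `t` is trivial or is `s` itself. -/
lemma inst_s {p a b c q w : List ℕ} (hw : w = sL ∨ w = tL)
    (h : p ++ (b ++ (a ++ (b ++ (c ++ (a ++ (c ++ q)))))) = w) :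
    (a = [] ∧ b = [] ∧ c = []) ∨ (a = [0] ∧ b = [1] ∧ c = [2] ∧ p = [] ∧ q = []) := by
  by_cases ha : a = []
  · subst ha
    have hb : b = [] := squareFree hw (p := p) (q := c ++ (c ++ q)) (by simpa using h)
    subst hb
    exact Or.inl ⟨rfl, rfl, squareFree hw (p := p) (q := q) (by simpa using h)⟩
  by_cases hb : b = []
  · subst hb
    have := squareFree hw (p := p) (u := a ++ c) (q := q) (by simpa using h)
    simp_all
  by_cases hc : c = []
  · subst hc
    have := squareFree hw (p := p) (u := b ++ a) (q := q) (by simpa using h)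
    simp_all
  right
  have ha' := List.length_pos_iff.mpr ha
  have hb' := List.length_pos_iff.mpr hb
  have hc' := List.length_pos_iff.mpr hc
  have hl := congrArg List.length h
  have hwl : w.length ≤ 7 := by rcases hw with rfl | rfl <;> simp
  simp only [List.length_append] at hl
  obtain ⟨a0, rfl⟩ := List.length_eq_one_iff.mp (show a.length = 1 by omega)
  obtain ⟨b0, rfl⟩ := List.length_eq_one_iff.mp (show b.length = 1 by omega)
  obtain ⟨c0, rfl⟩ := List.length_eq_one_iff.mp (show c.length = 1 by omega)
  simp only [List.length_singleton] at hl
  match p, q with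
  | [], [] => rcases hw with rfl | rfl <;> simp_all
  | [p0], [] => rcases hw with rfl | rfl <;> simp at h <;> omega
  | [], [q0] => rcases hw with rfl | rfl <;> simp at h <;> omega
  | _ :: _ :: _, _ => simp at hl; omega
  | _, _ :: _ :: _ => simp at hl; omega
  | _ :: _, _ :: _ => simp at hl; omega

/-- An instance of `t` inside `s` or `t` is trivial or is `t` itself. -/
lemma inst_t {p a b c q w : List ℕ} (hw : w = sL ∨ w = tL)
    (h : p ++ (b ++ (a ++ (c ++ (a ++ (b ++ (a ++ (c ++ q))))))) = w) :
    (a = [] ∧ b = [] ∧ c = []) ∨ (a = [0] ∧ b = [1] ∧ c = [2] ∧ p = [] ∧ q = []) := by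
  by_cases ha : a = []
  · subst ha
    have := squareFree hw (p := p) (u := b ++ c) (q := q) (by simpa using h)
    simp_all
  by_cases hb : b = []
  · subst hb
    exact absurd (squareFree hw (p := p ++ (a ++ c)) (q := c ++ q) (by simpa using h)) ha
  by_cases hc : c = []
  · subst hc
    exact absurd (squareFree hw (p := p ++ b) (q := b ++ (a ++ q)) (by simpa using h)) ha
  right
  have ha' := List.length_pos_iff.mpr ha
  have hb' := List.length_pos_iff.mpr hb
  have hc' := List.length_pos_iff.mpr hc
  have hl := congrArg List.length h
  have hwl : w.length ≤ 7 := by rcases hw with rfl | rfl <;> simp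
  simp only [List.length_append] at hl
  obtain ⟨a0, rfl⟩ := List.length_eq_one_iff.mp (show a.length = 1 by omega)
  obtain ⟨b0, rfl⟩ := List.length_eq_one_iff.mp (show b.length = 1 by omega)
  obtain ⟨c0, rfl⟩ := List.length_eq_one_iff.mp (show c.length = 1 by omega)
  simp only [List.length_singleton] at hl
  obtain rfl := List.length_eq_zero_iff.mp (show p.length = 0 by omega)
  obtain rfl := List.length_eq_zero_iff.mp (show q.length = 0 by omega)
  rcases hw with rfl | rfl <;> simp_all

/-- Rewriting by an instance of `s ≈ t` does not leave, or enter, the set `{s, t}`. -/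
lemma inst_mem_iff (p a b c q : List ℕ) :
    (p ++ (b ++ (a ++ (b ++ (c ++ (a ++ (c ++ q)))))) = sL ∨
      p ++ (b ++ (a ++ (b ++ (c ++ (a ++ (c ++ q)))))) = tL) ↔
    (p ++ (b ++ (a ++ (c ++ (a ++ (b ++ (a ++ (c ++ q))))))) = sL ∨
      p ++ (b ++ (a ++ (c ++ (a ++ (b ++ (a ++ (c ++ q))))))) = tL) := by
  constructor
  · intro h
    rcases inst_s h rfl with ⟨rfl, rfl, rfl⟩ | ⟨rfl, rfl, rfl, rfl, rfl⟩
    · simpa using h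
    · simp
  · intro h
    rcases inst_t h rfl with ⟨rfl, rfl, rfl⟩ | ⟨rfl, rfl, rfl, rfl, rfl⟩
    · simpa using h
    · simp

lemma eq_s_iff (w : F) : w = s ↔ w.toList = sL :=
  ⟨fun h => h ▸ rfl, fun h => FreeMonoid.toList.injective h⟩

lemma eq_t_iff (w : F) : w = t ↔ w.toList = tL :=
  ⟨fun h => h ▸ rfl, fun h => FreeMonoid.toList.injective h⟩

lemma synt_st : synt {s, t} s t := by
  rw [synt_apply]
  intro f p q
  simp only [Set.mem_insert_iff, Set.mem_singleton_iff]
  rw [eq_s_iff, eq_t_iff, eq_s_iff, eq_t_iff]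
  have := inst_mem_iff p.toList (f x).toList (f y).toList (f z).toList q.toList
  simpa only [s, t, map_mul, FreeMonoid.toList_mul, List.append_assoc] using this

/-- Since `s` is square-free, `x² ≈ x³` applies to it only trivially. -/
lemma synt_s_sq : synt {s} (x * x) (x * x * x) := by
  rw [synt_apply]
  intro f p q
  simp only [Set.mem_singleton_iff]
  rw [eq_s_iff, eq_s_iff]
  simp only [map_mul, FreeMonoid.toList_mul, List.append_assoc]
  constructor
  · intro h
    have h0 := squareFree (Or.inl rfl) h
    simpa [h0] using h
  · intro h
    have h0 := squareFree (Or.inl rfl) h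
    simpa [h0] using h

/-! ### Occurrence numbers modulo `n` -/

/-- The congruence identifying words on which all homomorphisms to `ℤ/n` agree; these record the
occurrence numbers of letters modulo `n`. -/
def abCon (n : ℕ) : Con F where
  r u v := ∀ g : F →* Multiplicative (ZMod n), g u = g v
  iseqv :=
    { refl := fun _ _ => rfl
      symm := fun h g => (h g).symm
      trans := fun h h' g => (h g).trans (h' g) }
  mul' := fun h h' g => by rw [map_mul, map_mul, h g, h' g]

lemma abCon_apply (n : ℕ) (u v : F) :
    abCon n u v ↔ ∀ g : F →* Multiplicative (ZMod n), g u = g v := Iff.rfl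

lemma abCon_fi (n : ℕ) : IsFullyInvariant (abCon n) := by
  intro f u v h
  rw [abCon_apply] at h ⊢
  exact fun g => h (g.comp f)

lemma theta_Av_le (n : ℕ) {u v : F} (h : theta (Av n) u v) : abCon n u v := by
  refine (fiGen_apply _ u v).mp h (abCon n) ⟨abCon_fi n, ?_⟩
  rintro p (rfl | rfl)
  · rw [abCon_apply]
    intro g
    apply Multiplicative.toAdd.injective
    simp
  · rw [abCon_apply]
    intro g
    simp [mul_comm]

lemma not_abCon_st {n : ℕ} (hn : 2 ≤ n) : ¬ abCon n s t := by
  rw [abCon_apply]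
  intro h
  have h1 := h (FreeMonoid.lift fun i => if i = 0 then Multiplicative.ofAdd 1 else 1)
  simp only [s, t, x, y, z, map_mul, FreeMonoid.lift_eval_of] at h1
  have h2 : Multiplicative.ofAdd (1 : ZMod n) = 1 := by simpa using h1
  have h3 : (1 : ZMod n) = 0 := congrArg Multiplicative.toAdd h2
  have : Fact (1 < n) := ⟨hn⟩
  exact one_ne_zero h3

/-! ### Comparison of the two sides -/

lemma Qv_le_Bv : Qv ≤ Bv := by
  apply le_gen
  rintro p rfl
  have h := theta_fi Qv (FreeMonoid.lift fun i => if i = 0 then x else 1) s t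
    (theta_gen rfl)
  simpa [s, t, x, y, z, mul_assoc] using h

/-- A commutative variety satisfying `x² ≈ x³` satisfies `s ≈ t`. -/
lemma theta_st_of_comm {W : MON} (hc : theta W (x * y) (y * x))
    (hB : theta W (x * x) (x * x * x)) : theta W s t := by
  have comm : ∀ u v : F, theta W (u * v) (v * u) := fun u v => by
    simpa [x, y] using
      theta_fi W (FreeMonoid.lift fun i => if i = 0 then u else v) _ _ hc
  -- Pass to the quotient monoid, which is commutative.
  let π : F →* (theta W).Quotient := (theta W).mk'
  have hπ : ∀ u v : F, theta W u v ↔ π u = π v := fun u v => (Con.eq _).symm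
  have cm : ∀ u v : F, π u * π v = π v * π u := fun u v => by
    rw [← map_mul, ← map_mul]; exact (hπ _ _).mp (comm u v)
  have e1 : theta W s (x * x * (y * y * z * z)) := by
    rw [hπ]
    simp only [s, map_mul]
    have c1 := cm x y
    have c2 := cm x z
    generalize π x = X at *
    generalize π y = Y at *
    generalize π z = Z at *
    have k1 : ∀ T, Y * (X * T) = X * (Y * T) := fun T => by rw [← mul_assoc, ← c1, mul_assoc]
    have k2 : ∀ T, Z * (X * T) = X * (Z * T) := fun T => by rw [← mul_assoc, ← c2, mul_assoc]
    simp only [mul_assoc, k1, k2]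
  have e2 : theta W t (x * x * x * (y * y * z * z)) := by
    rw [hπ]
    simp only [t, map_mul]
    have c1 := cm x y
    have c2 := cm x z
    have c3 := cm y z
    generalize π x = X at *
    generalize π y = Y at *
    generalize π z = Z at *
    have k1 : ∀ T, Y * (X * T) = X * (Y * T) := fun T => by rw [← mul_assoc, ← c1, mul_assoc]
    have k2 : ∀ T, Z * (X * T) = X * (Z * T) := fun T => by rw [← mul_assoc, ← c2, mul_assoc]
    have k3 : ∀ T, Z * (Y * T) = Y * (Z * T) := fun T => by rw [← mul_assoc, ← c3, mul_assoc]
    simp only [mul_assoc, k1, k2, k3]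
  rw [hπ] at e1 e2 ⊢
  rw [e1, e2, map_mul π (x * x), map_mul π (x * x * x), (hπ _ _).mp hB]

theorem statement10 (V : MON) (hcomm : theta V (x*y) (y*x))
    (hgrp : ∃ n : ℕ, 2 ≤ n ∧ Av n ≤ V) :
    Qv ⊔ (Bv ⊓ V) < Bv ⊓ (Qv ⊔ V) := by
  obtain ⟨n, hn, hA⟩ := hgrp
  refine lt_of_le_not_ge ?_ ?_
  · exact sup_le (le_inf Qv_le_Bv le_sup_left)
      (le_inf inf_le_left (inf_le_right.trans le_sup_right))
  intro hle
  have hQ : Qv ⊔ (Bv ⊓ V) ≤ Qv := by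
    refine sup_le le_rfl (le_gen ?_)
    rintro p rfl
    exact theta_st_of_comm (le_iff_theta.mp inf_le_right _ _ hcomm)
      (le_iff_theta.mp (inf_le_left : Bv ⊓ V ≤ Bv) _ _ (theta_gen rfl))
  -- The smallest variety for which `s` is an isoterm lies below the right-hand side.
  let W : MON := OrderDual.toDual ⟨synt {s}, synt_fi {s}⟩
  have hWB : W ≤ Bv := by
    apply le_gen
    rintro p rfl
    exact synt_s_sq
  have key : ∀ u v : F, theta (Qv ⊔ V) u v → u = s → v = s := by
    rintro u v h rfl
    have h1 : synt {s, t} s v := by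
      have hQ' : theta Qv s v := le_iff_theta.mp le_sup_left _ _ h
      refine (fiGen_apply _ _ _).mp hQ' _ ⟨synt_fi _, ?_⟩
      rintro p rfl
      exact synt_st
    have h2 : abCon n s v :=
      theta_Av_le n (le_iff_theta.mp (hA.trans le_sup_right) _ _ h)
    rcases (synt_saturates h1).mp (Or.inl rfl) with h3 | h3
    · exact h3
    · rw [Set.mem_singleton_iff] at h3
      subst h3
      exact absurd h2 (not_abCon_st hn)
  have hWQV : W ≤ Qv ⊔ V := by
    refine le_iff_theta.mpr fun u v h => ?_
    refine (synt_apply {s} u v).mpr fun f p q => ?_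
    have h' : theta (Qv ⊔ V) (p * f u * q) (p * f v * q) :=
      (theta _).mul ((theta _).mul ((theta _).refl p) (theta_fi _ f _ _ h)) ((theta _).refl q)
    exact ⟨key _ _ h', key _ _ ((theta _).symm h')⟩
  have hWQ : W ≤ Qv := (le_inf hWB hWQV).trans (hle.trans hQ)
  have hst : synt {s} s t := le_iff_theta.mp hWQ s t (theta_gen rfl)
  have hts : t = s := (synt_saturates hst).mp rfl
  rw [eq_s_iff] at hts
  exact absurd hts (by decide)
end

section
/- The element C₂ = ⟪{(x²,x³),(xy,yx)}⟫ is a modular element of the lattice MON of monoid varieties: for all Y, Z ∈ MON with Y ≤ Z, (C₂ ⊔ Y) ⊓ Z = (C₂ ⊓ Z) ⊔ Y. -/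
/-- The number of occurrences of the letter `a` in the word `w`. -/
def cnt (a : ℕ) (w : F) : ℕ := (FreeMonoid.toList w).count a

lemma cnt_mul (a : ℕ) (u v : F) : cnt a (u * v) = cnt a u + cnt a v := by
  simp [cnt, FreeMonoid.toList_mul]

lemma cnt_pow (a : ℕ) (u : F) (k : ℕ) : cnt a (u ^ k) = k * cnt a u := by
  induction k with
  | zero => simp [cnt]
  | succ k ih => rw [pow_succ, cnt_mul, ih]; ring

/-- Substituting `w` for the letter `a` and erasing all other letters turns `u` into a power
of `w`. -/
lemma lift_single (a : ℕ) (w u : F) :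
    FreeMonoid.lift (fun b => if b = a then w else 1) u = w ^ cnt a u := by
  induction u using FreeMonoid.inductionOn' with
  | one => simp [cnt]
  | of_mul b u ih =>
    rw [map_mul, ih, cnt_mul, FreeMonoid.lift_eval_of, pow_add]
    by_cases h : b = a <;> simp [h, cnt, FreeMonoid.toList_of]

lemma pow_count_rel (c : FICon) {u v : F} (h : c.val u v) (a : ℕ) (w : F) :
    c.val (w ^ cnt a u) (w ^ cnt a v) := by
  have := c.2 (FreeMonoid.lift (fun b => if b = a then w else 1)) u v h
  rwa [lift_single, lift_single] at this

/-- The congruence of `C₂`. -/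
def alpha : FICon := ⟨fiGen {(x*x, x*x*x), (x*y, y*x)}, isFullyInvariant_fiGen _⟩

lemma alpha_sq (w : F) : alpha.val (w ^ 2) (w ^ 3) := by
  have h : alpha.val (x*x) (x*x*x) := (fiGen_apply _ _ _).2 fun c hc => hc.2 (x*x, x*x*x) (by simp)
  have := alpha.2 (FreeMonoid.lift fun _ => w) _ _ h
  simpa [x, FreeMonoid.lift_eval_of, pow_succ, mul_assoc] using this

lemma alpha_comm (u v : F) : alpha.val (u * v) (v * u) := by
  have h : alpha.val (x*y) (y*x) := (fiGen_apply _ _ _).2 fun c hc => hc.2 (x*y, y*x) (by simp)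
  have := alpha.2 (FreeMonoid.lift fun b => if b = 0 then u else v) _ _ h
  simpa [x, y, FreeMonoid.lift_eval_of] using this

lemma alpha_pow (w : F) (n : ℕ) : alpha.val (w ^ (n + 2)) (w ^ 2) := by
  induction n with
  | zero => exact alpha.val.refl _
  | succ n ih =>
    have h := alpha.val.mul ih (alpha.val.refl w)
    rw [← pow_succ, ← pow_succ] at h
    exact alpha.val.trans h (alpha.val.symm (alpha_sq w))

/-- The quotient by the congruence of `C₂` is commutative. -/
instance alphaCommMonoid : CommMonoid alpha.val.Quotient :=
  { (inferInstance : Monoid alpha.val.Quotient) with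
    mul_comm := by
      intro a b
      induction a, b using Con.induction_on₂ with
      | H u v => exact (Con.eq _).2 (alpha_comm u v) }

/-- In the commutative quotient, a word is the product over its letters `a` of `a ^ cnt a u`. -/
lemma alpha_mk (u : F) : (u : alpha.val.Quotient) =
    ∏ a ∈ (FreeMonoid.toList u).toFinset,
      ((FreeMonoid.of a : F) : alpha.val.Quotient) ^ cnt a u := by
  rw [show (∏ a ∈ (FreeMonoid.toList u).toFinset,
      ((FreeMonoid.of a : F) : alpha.val.Quotient) ^ cnt a u) = _ from
    (Finset.prod_list_map_count (FreeMonoid.toList u)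
      (fun a => ((FreeMonoid.of a : F) : alpha.val.Quotient))).symm]
  induction u using FreeMonoid.inductionOn' with
  | one => rfl
  | of_mul b u ih =>
    rw [FreeMonoid.toList_mul, FreeMonoid.toList_of, List.map_append, List.prod_append, ← ih]
    simp

lemma C2_of_trunc {u v : F} (h : ∀ a, min (cnt a u) 2 = min (cnt a v) 2) : alpha.val u v := by
  rw [← Con.eq, alpha_mk u, alpha_mk v]
  have hs : (FreeMonoid.toList u).toFinset = (FreeMonoid.toList v).toFinset := by
    ext a
    have := h a
    simp only [List.mem_toFinset, ← List.count_pos_iff]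
    simp only [cnt] at this
    omega
  rw [hs]
  refine Finset.prod_congr rfl fun a _ => ?_
  have ha := h a
  by_cases h2 : 2 ≤ cnt a u
  · obtain ⟨m, hm⟩ := Nat.exists_eq_add_of_le' h2
    obtain ⟨n, hn⟩ := Nat.exists_eq_add_of_le' (show 2 ≤ cnt a v by omega)
    rw [hm, hn]
    exact (Con.eq _).2 (alpha.val.trans (alpha_pow _ m) (alpha.val.symm (alpha_pow _ n)))
  · rw [show cnt a u = cnt a v by omega]

/-- The congruence relating words with the same content (the congruence of `SL`). -/
def sigmaCon : Con F where
  r u v := ∀ a, a ∈ FreeMonoid.toList u ↔ a ∈ FreeMonoid.toList v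
  iseqv := ⟨fun _ _ => Iff.rfl, fun h a => (h a).symm, fun h k a => (h a).trans (k a)⟩
  mul' := by
    intro u v w t h k a
    simp only [FreeMonoid.toList_mul, List.mem_append, h a, k a]

lemma mem_hom (f : F →* F) (a : ℕ) (u : F) : a ∈ FreeMonoid.toList (f u) ↔
    ∃ b ∈ FreeMonoid.toList u, a ∈ FreeMonoid.toList (f (FreeMonoid.of b)) := by
  induction u using FreeMonoid.inductionOn' with
  | one => simp
  | of_mul b u ih => simp [FreeMonoid.toList_mul, ih]

/-- The congruence of equal content, as a fully invariant congruence. -/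
def sigmaFI : FICon := ⟨sigmaCon, by
  intro f u v h a
  rw [mem_hom, mem_hom]
  exact exists_congr fun b => and_congr_left' (h b)⟩

lemma alpha_le_sigma : alpha ≤ sigmaFI := by
  change fiGen _ ≤ sigmaCon
  refine sInf_le ⟨sigmaFI.2, ?_⟩
  rintro p (rfl | rfl) a
  · simp [FreeMonoid.toList_mul]
  · simp [FreeMonoid.toList_mul, or_comm]

lemma inf_val (c d : FICon) {u v : F} : (c ⊓ d).val u v ↔ c.val u v ∧ d.val u v := by
  rw [fiGC.u_inf]
  rfl

lemma mem_iff_cnt (a : ℕ) (u : F) : a ∈ FreeMonoid.toList u ↔ 0 < cnt a u :=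
  List.count_pos_iff.symm

/-- To relate `p` and `q` in `(α ⊓ η) ⊔ ζ`, it suffices to connect them through `ζ` to words that
are `α`- and `η`-related. -/
lemma rel_of_chain (H Z : FICon) {p q p' q' : F} (hp : Z.val p p') (hq : Z.val q q')
    (hA : alpha.val p' q') (hH : H.val p' q') : ((alpha ⊓ H) ⊔ Z).val p q := by
  have hZ : Z.val ≤ ((alpha ⊓ H) ⊔ Z).val := (le_sup_right : Z ≤ (alpha ⊓ H) ⊔ Z)
  have hI : (alpha ⊓ H).val ≤ ((alpha ⊓ H) ⊔ Z).val := (le_sup_left : _ ≤ (alpha ⊓ H) ⊔ Z)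
  exact Con.trans _ (hZ hp) (Con.trans _ (hI ((inf_val _ _).2 ⟨hA, hH⟩)) (Con.symm _ (hZ hq)))

/-- If `Z` satisfies a law with different contents, it satisfies `w ^ k = 1` for some `k ≥ 2`. -/
lemma exists_pow_one (Z : FICon) (h : ¬ Z ≤ sigmaFI) :
    ∃ k, 2 ≤ k ∧ ∀ w : F, Z.val (w ^ k) 1 := by
  have key : ∀ u v : F, Z.val u v → ∀ a, 0 < cnt a u → cnt a v = 0 →
      ∃ k, 2 ≤ k ∧ ∀ w : F, Z.val (w ^ k) 1 := by
    intro u v huv a hu hv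
    -- doubling the exponent `cnt a u ≥ 1` makes it at least `2`
    refine ⟨cnt a u * 2, by omega, fun w => ?_⟩
    have := Con.pow _ 2 (pow_count_rel Z huv a w)
    rwa [hv, pow_zero, one_pow, ← pow_mul] at this
  by_contra hk
  refine h (show Z.val ≤ sigmaCon from ?_)
  intro u v huv a
  rw [mem_iff_cnt, mem_iff_cnt]
  by_contra hne
  rcases Nat.eq_zero_or_pos (cnt a u) with h0 | h0
  · exact hk (key v u (Z.val.symm huv) a (by omega) h0)
  · exact hk (key u v huv a h0 (by omega))

/-- If `Z` preserves contents but is not below the congruence of `C₂`, it satisfies `w = w ^ k`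
for some `k ≥ 2`. -/
lemma exists_pow_self (Z : FICon) (h : Z ≤ sigmaFI) (h' : ¬ Z ≤ alpha) :
    ∃ k, 2 ≤ k ∧ ∀ w : F, Z.val w (w ^ k) := by
  have key : ∀ u v : F, Z.val u v → ∀ a, cnt a u = 1 → 2 ≤ cnt a v →
      ∃ k, 2 ≤ k ∧ ∀ w : F, Z.val w (w ^ k) := by
    intro u v huv a hu hv
    refine ⟨cnt a v, hv, fun w => ?_⟩
    have := pow_count_rel Z huv a w
    rwa [hu, pow_one] at this
  by_contra hk
  refine h' (show Z.val ≤ alpha.val from ?_)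
  intro u v huv
  refine C2_of_trunc fun a => ?_
  have hs := (show Z.val ≤ sigmaCon from h) huv a
  rw [mem_iff_cnt, mem_iff_cnt] at hs
  by_contra hne
  rcases le_or_gt (cnt a u) 1 with h1 | h1
  · exact hk (key u v huv a (by omega) (by omega))
  · exact hk (key v u (Z.val.symm huv) a (by omega) (by omega))

lemma main_le (H Z : FICon) : (alpha ⊔ Z) ⊓ H ≤ (alpha ⊓ H) ⊔ Z := by
  by_cases hZA : Z ≤ alpha
  · rw [sup_eq_left.2 hZA]
    exact le_sup_left
  change ((alpha ⊔ Z) ⊓ H).val ≤ ((alpha ⊓ H) ⊔ Z).val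
  intro p q hpq
  obtain ⟨hAZ, hH⟩ := (inf_val _ _).1 hpq
  by_cases hZS : Z ≤ sigmaFI
  · obtain ⟨k, hk, hw⟩ := exists_pow_self Z hZS hZA
    have hS : sigmaCon p q :=
      (show (alpha ⊔ Z).val ≤ sigmaCon from sup_le alpha_le_sigma hZS) hAZ
    refine rel_of_chain H Z (hw p) (hw q) (C2_of_trunc fun a => ?_) (Con.pow _ k hH)
    have ha := hS a
    rw [mem_iff_cnt, mem_iff_cnt] at ha
    rw [cnt_pow, cnt_pow]
    rcases Nat.eq_zero_or_pos (cnt a p) with h0 | h0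
    · rw [h0, show cnt a q = 0 by omega]
    · have h1 := Nat.mul_le_mul hk h0
      have h2 := Nat.mul_le_mul hk (ha.1 h0)
      omega
  · obtain ⟨k, hk, hw⟩ := exists_pow_one Z hZS
    have hmul : ∀ t : F, Z.val t (t * (p * q) ^ k) := fun t => by
      have := Z.val.mul (Z.val.refl t) (Z.val.symm (hw (p * q)))
      rwa [mul_one] at this
    refine rel_of_chain H Z (hmul p) (hmul q) (C2_of_trunc fun a => ?_)
      (H.val.mul hH (H.val.refl _))
    simp only [cnt_mul, cnt_pow]
    rcases Nat.eq_zero_or_pos (cnt a p + cnt a q) with h0 | h0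
    · rw [show cnt a p = 0 by omega, show cnt a q = 0 by omega]
    · have h1 := Nat.mul_le_mul hk h0
      omega

theorem statement13 : IsModularElt C2v := by
  intro Y Z hYZ
  have hle : (OrderDual.ofDual Z : FICon) ≤ OrderDual.ofDual Y := hYZ
  have h : (alpha ⊓ OrderDual.ofDual Y) ⊔ OrderDual.ofDual Z =
      (alpha ⊔ OrderDual.ofDual Z) ⊓ OrderDual.ofDual Y :=
    le_antisymm (sup_le (le_inf (inf_le_left.trans le_sup_left) inf_le_right)
      (le_inf le_sup_right hle)) (main_le _ _)
  exact h
end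

section
/- Let s = yxyzxz and t = yxzxyxz, and let η be a monoid endomorphism of the free monoid F that maps at least one of the letters x, y, z to the empty word. If a = c · η(b) · d for some a, b ∈ {s, t} and some words c, d ∈ F, then η(b) is the empty word. -/
/-- A decision procedure for square-freeness: a list is square-free as soon as no nonempty
factor has equal first and second halves. -/
lemma eq_nil_of_square_infix {l u : List ℕ}
    (hl : ∀ m ∈ l.tails, ∀ w ∈ m.inits, w.take (w.length / 2) = w.drop (w.length / 2) → w = [])
    (h : u ++ u <:+: l) : u = [] := by
  obtain ⟨m, hm, hml⟩ := List.infix_iff_prefix_suffix.mp h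
  have hhalf : (u ++ u).length / 2 = u.length := by
    rw [List.length_append]; omega
  have key := hl m ((List.mem_tails _ _).mpr hml) (u ++ u) ((List.mem_inits _ _).mpr hm)
  rw [hhalf, List.take_left, List.drop_left] at key
  exact (List.append_eq_nil_iff.mp (key rfl)).1

/-- The words `s` and `t` are square-free. -/
lemma eq_one_of_square_factor {a c u d : F} (ha : a = s ∨ a = t)
    (h : a = c * (u * u) * d) : u = 1 := by
  have hinfix : u.toList ++ u.toList <:+: a.toList := ⟨c.toList, d.toList, h.symm⟩
  refine FreeMonoid.toList.injective (eq_nil_of_square_infix ?_ hinfix)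
  rcases ha with rfl | rfl
  · change ∀ m ∈ [1, 0, 1, 2, 0, 2].tails, _
    decide
  · change ∀ m ∈ [1, 0, 2, 0, 1, 0, 2].tails, _
    decide

theorem statement15 (η : F →* F) (hη : η x = 1 ∨ η y = 1 ∨ η z = 1)
    (a b : F) (ha : a = s ∨ a = t) (hb : b = s ∨ b = t)
    (c d : F) (h : a = c * η b * d) :
    η b = 1 := by
  -- Any displayed factorisation of `a` with a square in the middle kills the squared word.
  have sq : ∀ p u q : F, a = p * (u * u) * q → u = 1 := fun _ _ _ => eq_one_of_square_factor ha
  rcases hb with rfl | rfl <;> simp only [s, t, map_mul] at h ⊢ <;>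
    rcases hη with h1 | h1 | h1 <;> simp only [h1, mul_one, one_mul] at h ⊢
  -- `yyzz`
  · have hy := sq c (η y) (η z * η z * d) (by simp only [h, mul_assoc])
    have hz := sq (c * η y * η y) (η z) d (by simp only [h, mul_assoc])
    simp only [hy, hz, mul_one]
  -- `xzxz`
  · have hu := sq c (η x * η z) d (by simp only [h, mul_assoc])
    simp only [hu, mul_one, mul_assoc]
  -- `yxyx`
  · have hu := sq c (η y * η x) d (by simp only [h, mul_assoc])
    simp only [hu, mul_one, mul_assoc]
  -- `yzyz`
  · have hu := sq c (η y * η z) d (by simp only [h, mul_assoc])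
    simp only [hu, mul_one, mul_assoc]
  -- `xzxxz`, which becomes `zz` once `x` is erased
  · have hx := sq (c * η x * η z) (η x) (η z * d) (by simp only [h, mul_assoc])
    simp only [hx, mul_one, one_mul] at h ⊢
    have hz := sq c (η z) d h
    simp only [hz, mul_one]
  -- `yxxyx`, which becomes `yy` once `x` is erased
  · have hx := sq (c * η y) (η x) (η y * η x * d) (by simp only [h, mul_assoc])
    simp only [hx, mul_one] at h ⊢
    have hy := sq c (η y) d h
    simp only [hy, mul_one]
end
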